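/- Let K be a field and w : ℕ → ℕ → K a Pascal-type weight, with w-product ∘ on K[[x]]. For a ∈ K[[x]] with a_0 ≠ 0 and b ∈ K[[x]], define the ∘-substitution b∘(a) := Σ_{n≥0} b_n · (xⁿ ∘ a^{(n)}) (well-defined since xⁿ ∘ a^{(n)} has order exactly n), and for b_0 ≠ 0, a_0 ≠ 0 define the lower triangular matrix (b, a)₀ whose n-th column is the coefficient sequence of b ∘ (xⁿ ∘ a^{(n)}). Then the set of matrices (b, a)₀ with b_0 ≠ 0 and a_0 ≠ 0 is a group under matrix multiplication, with multiplication rule (b, a)₀ · (f, g)₀ = (b ∘ (f∘(a)), a ∘ (g∘(a)))₀. -/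

import Mathlib

open PowerSeries

/-- A Pascal-type weight: the identities satisfied by the entries of every zero
generalized Pascal matrix `₀P`. -/
def IsPascalWeight {K : Type*} [Field K] (w : ℕ → ℕ → K) : Prop :=
  (∀ n, w n 0 = 1) ∧
  (∀ n m, m ≤ n → w n m = w n (n - m)) ∧
  (∀ n m k, m ≤ n → w (n + k) k * w n m = w (n + k) (m + k) * w (m + k) k)

/-- The `w`-product of formal power series:
`[xⁿ](a ∘ b) = ∑_{m=0}^{n} w(n,m)·aₘ·b_{n−m}`. -/
noncomputable def wmul {K : Type*} [Field K] (w : ℕ → ℕ → K)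
    (a b : PowerSeries K) : PowerSeries K :=
  PowerSeries.mk fun n => ∑ m ∈ Finset.range (n + 1),
    w n m * PowerSeries.coeff m a * PowerSeries.coeff (n - m) b

/-- The `n`-th `∘`-power of `a` (with `a^{(0)} = 1`). -/
noncomputable def wpow {K : Type*} [Field K] (w : ℕ → ℕ → K)
    (a : PowerSeries K) : ℕ → PowerSeries K
  | 0 => 1
  | n + 1 => wmul w a (wpow w a n)

/-- The `∘`-substitution `b∘(a) = ∑_{n≥0} bₙ·(xⁿ ∘ a^{(n)})`, computed
coefficientwise (`xⁿ ∘ a^{(n)}` has order `≥ n`). -/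
noncomputable def wsubst {K : Type*} [Field K] (w : ℕ → ℕ → K)
    (b a : PowerSeries K) : PowerSeries K :=
  PowerSeries.mk fun k => ∑ n ∈ Finset.range (k + 1),
    PowerSeries.coeff n b * PowerSeries.coeff k (wmul w (X ^ n) (wpow w a n))

/-- The matrix `(b, a)₀` whose `n`-th column is the coefficient sequence of
`b ∘ (xⁿ ∘ a^{(n)})`. -/
noncomputable def rioMat {K : Type*} [Field K] (w : ℕ → ℕ → K)
    (b a : PowerSeries K) (k n : ℕ) : K :=
  PowerSeries.coeff k (wmul w b (wmul w (X ^ n) (wpow w a n)))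

/-!
Substitution `u ↦ u∘(a)` sends `Xⁿ` to `xⁿ ∘ a^{(n)}`, and these series multiply under `∘` with the
same structure constants as the monomials, so substitution is an endomorphism of `(K⟦X⟧, ∘)`. The
matrix `(b, a)₀` represents `u ↦ b ∘ u∘(a)`; applied to the columns of `(f, g)₀`, this gives the
multiplication rule. Since the diagonal entries `b₀ a₀ⁿ` are nonzero, forward substitution solves
`b ∘ f∘(a) = 1` and `a ∘ g∘(a) = 1`, so `(f, g)₀` is a right inverse of `(b, a)₀`. It is also a left
inverse because finite truncations of lower triangular matrices are multiplicative and one-sided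
inverses of square matrices are two-sided.
-/

open Finset.HasAntidiagonal

lemma sum_range_sum_antidiagonal_eq {M : Type*} [AddCommMonoid M] {f : ℕ → ℕ → M} {n : ℕ}
    (hf : ∀ i j, n ≤ i + j → f i j = 0) :
    ∑ m ∈ Finset.range n, ∑ p ∈ antidiagonal m, f p.1 p.2 =
      ∑ i ∈ Finset.range n, ∑ j ∈ Finset.range n, f i j := by
  simp only [Finset.Nat.sum_antidiagonal_eq_sum_range_succ f]
  rw [Finset.sum_range_diag_flip n f]
  refine Finset.sum_congr rfl fun i _ => ?_
  refine Finset.sum_subset (Finset.range_mono (Nat.sub_le n i)) fun j _ hj => hf i j ?_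
  rw [Finset.mem_range] at hj
  omega

lemma sum_range_succ_mul_eq_sum_fin {R : Type*} [NonUnitalNonAssocSemiring R] {A : ℕ → ℕ → R}
    (hA : ∀ k n, k < n → A k n = 0) (B : ℕ → ℕ → R) {k N : ℕ} (hk : k < N) (m : ℕ) :
    ∑ j ∈ Finset.range (k + 1), A k j * B j m = ∑ j : Fin N, A k j * B j m := by
  rw [Fin.sum_univ_eq_sum_range (fun j => A k j * B j m) N]
  refine Finset.sum_subset (Finset.range_mono hk) fun j _ hj => ?_
  rw [hA k j (by simpa using hj), zero_mul]

lemma lowerTriangular_mul_eq_one_comm {R : Type*} [Semiring R] [IsStablyFiniteRing R]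
    {A B : ℕ → ℕ → R} (hA : ∀ k n, k < n → A k n = 0) (hB : ∀ k n, k < n → B k n = 0)
    (hAB : ∀ k m, ∑ j ∈ Finset.range (k + 1), A k j * B j m = if k = m then 1 else 0) (k m : ℕ) :
    ∑ j ∈ Finset.range (k + 1), B k j * A j m = if k = m then 1 else 0 := by
  let truncate (T : ℕ → ℕ → R) : Matrix (Fin (k + m + 1)) (Fin (k + m + 1)) R :=
    Matrix.of fun i j => T i j
  have truncate_mul : truncate A * truncate B = 1 := by
    ext i j
    simpa [truncate, Matrix.mul_apply, Matrix.one_apply, Fin.ext_iff,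
      sum_range_succ_mul_eq_sum_fin hA B i.isLt] using hAB i j
  have truncate_mul_swap : truncate B * truncate A = 1 := mul_eq_one_comm.mp truncate_mul
  have hk : k < k + m + 1 := by omega
  have hm : m < k + m + 1 := by omega
  simpa [truncate, Matrix.mul_apply, Matrix.one_apply, sum_range_succ_mul_eq_sum_fin hB A hk]
    using congrFun (congrFun truncate_mul_swap ⟨k, hk⟩) ⟨m, hm⟩

/-- The solution `x` of the lower triangular linear system `T x = c` computed by forward
substitution. Entries of `T` above the diagonal are never read, and the diagonal entries are meant
to be nonzero. -/
def forwardSubst {K : Type*} [DivisionRing K] (T : ℕ → ℕ → K) (c : ℕ → K) : ℕ → K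
  | k => (T k k)⁻¹ * (c k - ∑ j : Fin k, T k j * forwardSubst T c j)
termination_by k => k
decreasing_by exact j.isLt

lemma sum_mul_forwardSubst {K : Type*} [DivisionRing K] {T : ℕ → ℕ → K} (hT : ∀ n, T n n ≠ 0)
    (c : ℕ → K) (k : ℕ) :
    ∑ j ∈ Finset.range (k + 1), T k j * forwardSubst T c j = c k := by
  rw [Finset.sum_range_succ, forwardSubst.eq_1 T c k, mul_inv_cancel_left₀ (hT k),
    Fin.sum_univ_eq_sum_range (fun j => T k j * forwardSubst T c j) k, add_sub_cancel]

section WProduct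

variable {K : Type*} [Field K] {w : ℕ → ℕ → K}

lemma coeff_wmul (a b : K⟦X⟧) (n : ℕ) :
    coeff n (wmul w a b) =
      ∑ p ∈ antidiagonal n, w n p.1 * coeff p.1 a * coeff p.2 b := by
  rw [Finset.Nat.sum_antidiagonal_eq_sum_range_succ (fun i j => w n i * coeff i a * coeff j b),
    wmul, coeff_mk]

lemma smul_wmul (r : K) (a b : K⟦X⟧) : wmul w (r • a) b = r • wmul w a b := by
  ext n
  simp only [coeff_wmul, map_smul, smul_eq_mul, Finset.mul_sum]
  exact Finset.sum_congr rfl fun _ _ => by ring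

lemma X_pow_wmul_X_pow (i j : ℕ) :
    wmul w (X ^ i) (X ^ j) = w (i + j) i • (X ^ (i + j) : K⟦X⟧) := by
  ext n
  simp only [coeff_wmul, coeff_X_pow, map_smul, smul_eq_mul, mul_ite, mul_one, mul_zero]
  by_cases hn : n = i + j
  · subst hn
    rw [Finset.sum_eq_single (i, j)] <;> grind [mem_antidiagonal]
  · rw [if_neg hn]
    exact Finset.sum_eq_zero fun p hp => by grind [mem_antidiagonal]

lemma X_pow_dvd_wmul_of_dvd_left {n : ℕ} {a : K⟦X⟧} (ha : X ^ n ∣ a) (b : K⟦X⟧) :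
    X ^ n ∣ wmul w a b := by
  rw [X_pow_dvd_iff] at ha ⊢
  intro k hk
  rw [coeff_wmul]
  refine Finset.sum_eq_zero fun p hp => ?_
  rw [ha p.1 ((antidiagonal.fst_le hp).trans_lt hk), mul_zero, zero_mul]

lemma X_pow_dvd_wmul_of_dvd_right {n : ℕ} {b : K⟦X⟧} (hb : X ^ n ∣ b) (a : K⟦X⟧) :
    X ^ n ∣ wmul w a b := by
  rw [X_pow_dvd_iff] at hb ⊢
  intro k hk
  rw [coeff_wmul]
  refine Finset.sum_eq_zero fun p hp => ?_
  rw [hb p.2 ((antidiagonal.snd_le hp).trans_lt hk), mul_zero]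

end WProduct

namespace IsPascalWeight

variable {K : Type*} [Field K] {w : ℕ → ℕ → K}

lemma apply_zero (hw : IsPascalWeight w) (n : ℕ) : w n 0 = 1 := hw.1 n

lemma apply_add_symm (hw : IsPascalWeight w) (i j : ℕ) : w (i + j) i = w (i + j) j := by
  simpa using hw.2.1 (i + j) i (Nat.le_add_right i j)

lemma apply_add_assoc (hw : IsPascalWeight w) (i j k : ℕ) :
    w (i + j + k) (i + j) * w (i + j) i = w (i + j + k) i * w (j + k) j := by
  have h := hw.2.2 (j + k) j i (Nat.le_add_right j k)
  rw [add_comm (j + k) i, add_comm j i] at h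
  rw [add_assoc i j k, h]

lemma wmul_comm (hw : IsPascalWeight w) (a b : K⟦X⟧) : wmul w a b = wmul w b a := by
  ext n
  rw [coeff_wmul, coeff_wmul, ← Finset.Nat.sum_antidiagonal_swap]
  refine Finset.sum_congr rfl fun p hp => ?_
  obtain rfl := mem_antidiagonal.mp hp
  simp only [Prod.fst_swap, Prod.snd_swap, hw.apply_add_symm p.1 p.2]
  ring

lemma wmul_assoc (hw : IsPascalWeight w) (a b c : K⟦X⟧) :
    wmul w (wmul w a b) c = wmul w a (wmul w b c) := by
  ext n
  simp only [coeff_wmul, Finset.sum_mul, Finset.mul_sum, Finset.sum_sigma']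
  refine Finset.sum_nbij' (fun ⟨⟨_, k⟩, ⟨i, j⟩⟩ => ⟨(i, j + k), (j, k)⟩)
    (fun ⟨⟨i, _⟩, ⟨j, k⟩⟩ => ⟨(i + j, k), (i, j)⟩) ?_ ?_ ?_ ?_ ?_
  any_goals grind [mem_antidiagonal]
  rintro ⟨⟨_, k⟩, ⟨i, j⟩⟩ hijk
  obtain ⟨rfl, rfl⟩ : _ ∧ i + j = _ := by simpa using hijk
  linear_combination (coeff i a * coeff j b * coeff k c) * hw.apply_add_assoc i j k

lemma one_wmul (hw : IsPascalWeight w) (a : K⟦X⟧) : wmul w 1 a = a := by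
  ext n
  rw [coeff_wmul, Finset.sum_eq_single (0, n)]
  · simp [hw.apply_zero]
  · grind [coeff_one, mem_antidiagonal]
  · simp

lemma wmul_one (hw : IsPascalWeight w) (a : K⟦X⟧) : wmul w a 1 = a := by
  rw [hw.wmul_comm, hw.one_wmul]

lemma wmul_wmul_wmul_comm (hw : IsPascalWeight w) (a b c d : K⟦X⟧) :
    wmul w (wmul w a b) (wmul w c d) = wmul w (wmul w a c) (wmul w b d) := by
  rw [hw.wmul_assoc, hw.wmul_assoc, ← hw.wmul_assoc b, hw.wmul_comm b c, hw.wmul_assoc c]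

lemma one_wpow (hw : IsPascalWeight w) (n : ℕ) : wpow w 1 n = 1 := by
  induction n with
  | zero => rfl
  | succ n ih => rw [wpow, ih, hw.one_wmul]

lemma wpow_add (hw : IsPascalWeight w) (a : K⟦X⟧) (i j : ℕ) :
    wpow w a (i + j) = wmul w (wpow w a i) (wpow w a j) := by
  induction i with
  | zero => rw [zero_add, wpow, hw.one_wmul]
  | succ i ih => rw [Nat.succ_add, wpow, wpow, ih, hw.wmul_assoc]

lemma wmul_wpow (hw : IsPascalWeight w) (a b : K⟦X⟧) (n : ℕ) :
    wpow w (wmul w a b) n = wmul w (wpow w a n) (wpow w b n) := by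
  induction n with
  | zero => simp only [wpow, hw.one_wmul]
  | succ n ih => simp only [wpow, ih, hw.wmul_wmul_wmul_comm]

lemma coeff_wmul_of_X_pow_dvd (hw : IsPascalWeight w) {n : ℕ} {b : K⟦X⟧} (hb : X ^ n ∣ b)
    (a : K⟦X⟧) : coeff n (wmul w a b) = coeff 0 a * coeff n b := by
  rw [X_pow_dvd_iff] at hb
  rw [coeff_wmul, Finset.sum_eq_single (0, n)]
  · rw [hw.apply_zero, one_mul]
  · intro p hp hp_ne
    rw [hb p.2 (by grind [mem_antidiagonal]), mul_zero]
  · simp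

lemma coeff_zero_wmul (hw : IsPascalWeight w) (a b : K⟦X⟧) :
    coeff 0 (wmul w a b) = coeff 0 a * coeff 0 b :=
  hw.coeff_wmul_of_X_pow_dvd (by simp) a

lemma coeff_zero_wpow (hw : IsPascalWeight w) (a : K⟦X⟧) (n : ℕ) :
    coeff 0 (wpow w a n) = coeff 0 a ^ n := by
  induction n with
  | zero => simp [wpow]
  | succ n ih => rw [wpow, hw.coeff_zero_wmul, ih, pow_succ']

end IsPascalWeight

section Substitution

variable {K : Type*} [Field K] {w : ℕ → ℕ → K}

/-- The series `xⁿ ∘ a^{(n)}`: the image of `Xⁿ` under the `∘`-substitution of `a`, and the `n`-th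
column of `(1, a)₀`. -/
noncomputable def wcol (w : ℕ → ℕ → K) (a : K⟦X⟧) (n : ℕ) : K⟦X⟧ :=
  wmul w (X ^ n) (wpow w a n)

lemma X_pow_dvd_wcol (a : K⟦X⟧) (n : ℕ) : X ^ n ∣ wcol w a n :=
  X_pow_dvd_wmul_of_dvd_left dvd_rfl _

lemma coeff_wcol_of_lt (a : K⟦X⟧) {k n : ℕ} (hkn : k < n) : coeff k (wcol w a n) = 0 :=
  X_pow_dvd_iff.mp (X_pow_dvd_wcol a n) k hkn

lemma coeff_wsubst_of_lt (u a : K⟦X⟧) {k N : ℕ} (hk : k < N) :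
    coeff k (wsubst w u a) = ∑ n ∈ Finset.range N, coeff n u * coeff k (wcol w a n) := by
  rw [wsubst, coeff_mk]
  refine Finset.sum_subset (Finset.range_mono hk) fun n _ hn => ?_
  exact mul_eq_zero_of_right _ (coeff_wcol_of_lt a (by simpa using hn))

lemma wsubst_X_pow (a : K⟦X⟧) (n : ℕ) : wsubst w (X ^ n) a = wcol w a n := by
  ext k
  rw [coeff_wsubst_of_lt _ a (show k < k + n + 1 by omega), Finset.sum_eq_single n]
  · rw [coeff_X_pow_self, one_mul]
  · intro m _ hm
    rw [coeff_X_pow, if_neg hm, zero_mul]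
  · simp

lemma rioMat_eq_coeff_wmul_wcol (b a : K⟦X⟧) (k n : ℕ) :
    rioMat w b a k n = coeff k (wmul w b (wcol w a n)) := rfl

lemma rioMat_eq_zero_of_lt (b a : K⟦X⟧) (k n : ℕ) (hkn : k < n) : rioMat w b a k n = 0 :=
  X_pow_dvd_iff.mp (X_pow_dvd_wmul_of_dvd_right (X_pow_dvd_wcol a n) b) k hkn

lemma coeff_wmul_wsubst (b u a : K⟦X⟧) (k : ℕ) :
    coeff k (wmul w b (wsubst w u a)) =
      ∑ n ∈ Finset.range (k + 1), rioMat w b a k n * coeff n u := by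
  simp only [rioMat_eq_coeff_wmul_wcol, coeff_wmul, Finset.sum_mul]
  rw [Finset.sum_comm]
  refine Finset.sum_congr rfl fun p hp => ?_
  rw [coeff_wsubst_of_lt u a (Nat.lt_succ_of_le (antidiagonal.snd_le hp)), Finset.mul_sum]
  exact Finset.sum_congr rfl fun _ _ => by ring

end Substitution

namespace IsPascalWeight

variable {K : Type*} [Field K] {w : ℕ → ℕ → K}

lemma coeff_wcol_self (hw : IsPascalWeight w) (a : K⟦X⟧) (n : ℕ) :
    coeff n (wcol w a n) = coeff 0 a ^ n := by
  rw [wcol, hw.wmul_comm, hw.coeff_wmul_of_X_pow_dvd dvd_rfl, hw.coeff_zero_wpow,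
    coeff_X_pow_self, mul_one]

lemma wcol_wmul_wcol (hw : IsPascalWeight w) (a : K⟦X⟧) (i j : ℕ) :
    wmul w (wcol w a i) (wcol w a j) = w (i + j) i • wcol w a (i + j) := by
  rw [wcol, wcol, hw.wmul_wmul_wmul_comm, X_pow_wmul_X_pow, ← hw.wpow_add, smul_wmul, wcol]

lemma coeff_wsubst_wmul_wsubst (hw : IsPascalWeight w) (u v a : K⟦X⟧) (k : ℕ) :
    coeff k (wmul w (wsubst w u a) (wsubst w v a)) =
      ∑ i ∈ Finset.range (k + 1), ∑ j ∈ Finset.range (k + 1),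
        w (i + j) i * coeff i u * coeff j v * coeff k (wcol w a (i + j)) := by
  rw [coeff_wmul_wsubst, Finset.sum_comm]
  refine Finset.sum_congr rfl fun j _ => ?_
  rw [rioMat_eq_coeff_wmul_wcol, hw.wmul_comm, coeff_wmul_wsubst, Finset.sum_mul]
  refine Finset.sum_congr rfl fun i _ => ?_
  rw [rioMat_eq_coeff_wmul_wcol, hw.wmul_comm, hw.wcol_wmul_wcol, map_smul, smul_eq_mul]
  ring

lemma wsubst_wmul (hw : IsPascalWeight w) (u v a : K⟦X⟧) :
    wsubst w (wmul w u v) a = wmul w (wsubst w u a) (wsubst w v a) := by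
  ext k
  rw [hw.coeff_wsubst_wmul_wsubst, ← sum_range_sum_antidiagonal_eq fun i j hij => by
    rw [coeff_wcol_of_lt a hij, mul_zero], coeff_wsubst_of_lt _ a k.lt_succ_self]
  refine Finset.sum_congr rfl fun m _ => ?_
  rw [coeff_wmul, Finset.sum_mul]
  refine Finset.sum_congr rfl fun p hp => ?_
  rw [mem_antidiagonal.mp hp]

lemma one_wsubst (hw : IsPascalWeight w) (a : K⟦X⟧) : wsubst w 1 a = 1 := by
  rw [← pow_zero X, wsubst_X_pow, wcol, wpow, hw.wmul_one]

lemma wsubst_wpow (hw : IsPascalWeight w) (g a : K⟦X⟧) (n : ℕ) :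
    wsubst w (wpow w g n) a = wpow w (wsubst w g a) n := by
  induction n with
  | zero => rw [wpow, wpow, hw.one_wsubst]
  | succ n ih => rw [wpow, hw.wsubst_wmul, ih, wpow]

lemma wsubst_wcol (hw : IsPascalWeight w) (g a : K⟦X⟧) (n : ℕ) :
    wsubst w (wcol w g n) a = wcol w (wmul w a (wsubst w g a)) n := by
  rw [wcol, hw.wsubst_wmul, wsubst_X_pow, hw.wsubst_wpow, wcol, hw.wmul_assoc,
    ← hw.wmul_wpow, wcol]

lemma rioMat_self (hw : IsPascalWeight w) (b a : K⟦X⟧) (n : ℕ) :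
    rioMat w b a n n = coeff 0 b * coeff 0 a ^ n := by
  rw [rioMat_eq_coeff_wmul_wcol, hw.coeff_wmul_of_X_pow_dvd (X_pow_dvd_wcol a n),
    hw.coeff_wcol_self]

lemma rioMat_one_one (hw : IsPascalWeight w) (k n : ℕ) :
    rioMat w 1 1 k n = if k = n then 1 else 0 := by
  rw [rioMat, hw.one_wmul, hw.one_wpow, hw.wmul_one, coeff_X_pow]

lemma sum_rioMat_mul_rioMat (hw : IsPascalWeight w) (b a f g : K⟦X⟧) (k m : ℕ) :
    ∑ j ∈ Finset.range (k + 1), rioMat w b a k j * rioMat w f g j m =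
      rioMat w (wmul w b (wsubst w f a)) (wmul w a (wsubst w g a)) k m := by
  simp only [rioMat_eq_coeff_wmul_wcol f g]
  rw [← coeff_wmul_wsubst, hw.wsubst_wmul, hw.wsubst_wcol, ← hw.wmul_assoc,
    rioMat_eq_coeff_wmul_wcol]

lemma coeff_zero_wmul_wsubst (hw : IsPascalWeight w) (b u a : K⟦X⟧) :
    coeff 0 (wmul w b (wsubst w u a)) = coeff 0 b * coeff 0 u := by
  rw [coeff_wmul_wsubst, Finset.sum_range_one, hw.rioMat_self, pow_zero, mul_one]

lemma exists_wmul_wsubst_eq (hw : IsPascalWeight w) {b a : K⟦X⟧} (hb : coeff 0 b ≠ 0)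
    (ha : coeff 0 a ≠ 0) (c : K⟦X⟧) : ∃ u : K⟦X⟧, wmul w b (wsubst w u a) = c := by
  have diag_ne_zero (n : ℕ) : rioMat w b a n n ≠ 0 := by
    rw [hw.rioMat_self]
    exact mul_ne_zero hb (pow_ne_zero n ha)
  refine ⟨PowerSeries.mk (forwardSubst (rioMat w b a) fun n => coeff n c), ?_⟩
  ext k
  simp only [coeff_wmul_wsubst, coeff_mk, sum_mul_forwardSubst diag_ne_zero]

lemma exists_coeff_zero_ne_zero_wmul_wsubst_eq_one (hw : IsPascalWeight w) {b a : K⟦X⟧}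
    (hb : coeff 0 b ≠ 0) (ha : coeff 0 a ≠ 0) :
    ∃ u : K⟦X⟧, coeff 0 u ≠ 0 ∧ wmul w b (wsubst w u a) = 1 := by
  obtain ⟨u, hu⟩ := hw.exists_wmul_wsubst_eq hb ha 1
  have coeff_mul : coeff 0 b * coeff 0 u = 1 := by
    rw [← hw.coeff_zero_wmul_wsubst b u a, hu, coeff_zero_one]
  exact ⟨u, right_ne_zero_of_mul_eq_one coeff_mul, hu⟩

end IsPascalWeight

/-- The zero generalized Riordan group: the matrices `(b,a)₀` with `b₀ ≠ 0`,
`a₀ ≠ 0` are lower triangular and form a group under matrix multiplication, with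
`(b,a)₀ · (f,g)₀ = (b ∘ f∘(a), a ∘ g∘(a))₀`:  products of members are members, the
identity matrix is `(1,1)₀`, and every member has a two-sided inverse which is a
member. -/
theorem zero_generalized_Riordan_group {K : Type*} [Field K]
    (w : ℕ → ℕ → K) (hw : IsPascalWeight w) :
    (∀ b a : PowerSeries K, ∀ k n : ℕ, k < n → rioMat w b a k n = 0) ∧
    (∀ b a f g : PowerSeries K,
      PowerSeries.coeff 0 b ≠ 0 → PowerSeries.coeff 0 a ≠ 0 →
      PowerSeries.coeff 0 f ≠ 0 → PowerSeries.coeff 0 g ≠ 0 →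
      (∀ k m : ℕ, ∑ j ∈ Finset.range (k + 1), rioMat w b a k j * rioMat w f g j m =
        rioMat w (wmul w b (wsubst w f a)) (wmul w a (wsubst w g a)) k m) ∧
      PowerSeries.coeff 0 (wmul w b (wsubst w f a)) ≠ 0 ∧
      PowerSeries.coeff 0 (wmul w a (wsubst w g a)) ≠ 0) ∧
    (∀ k n : ℕ, rioMat w 1 1 k n = if k = n then 1 else 0) ∧
    (∀ b a : PowerSeries K,
      PowerSeries.coeff 0 b ≠ 0 → PowerSeries.coeff 0 a ≠ 0 →
      ∃ f g : PowerSeries K, PowerSeries.coeff 0 f ≠ 0 ∧ PowerSeries.coeff 0 g ≠ 0 ∧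
        (∀ k m : ℕ, ∑ j ∈ Finset.range (k + 1),
          rioMat w b a k j * rioMat w f g j m = if k = m then 1 else 0) ∧
        (∀ k m : ℕ, ∑ j ∈ Finset.range (k + 1),
          rioMat w f g k j * rioMat w b a j m = if k = m then 1 else 0)) := by
  refine ⟨rioMat_eq_zero_of_lt, fun b a f g hb ha hf hg => ?_, hw.rioMat_one_one,
    fun b a hb ha => ?_⟩
  · refine ⟨hw.sum_rioMat_mul_rioMat b a f g, ?_, ?_⟩
    · rw [hw.coeff_zero_wmul_wsubst]
      exact mul_ne_zero hb hf
    · rw [hw.coeff_zero_wmul_wsubst]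
      exact mul_ne_zero ha hg
  · obtain ⟨f, hf, wmul_f⟩ := hw.exists_coeff_zero_ne_zero_wmul_wsubst_eq_one hb ha
    obtain ⟨g, hg, wmul_g⟩ := hw.exists_coeff_zero_ne_zero_wmul_wsubst_eq_one ha ha
    have right_inverse (k m : ℕ) : ∑ j ∈ Finset.range (k + 1),
        rioMat w b a k j * rioMat w f g j m = if k = m then 1 else 0 := by
      rw [hw.sum_rioMat_mul_rioMat, wmul_f, wmul_g, hw.rioMat_one_one]
    exact ⟨f, g, hf, hg, right_inverse, lowerTriangular_mul_eq_one_comm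
      (rioMat_eq_zero_of_lt b a) (rioMat_eq_zero_of_lt f g) right_inverse⟩
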